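/- arXiv:2405.00904 — 3 statements merged into one kernel-verified Lean document; each statement's English description precedes it below -/
import Mathlib

section
/- The indicator function u₀(x,y) = 1 if x ≤ −0.4y² + 0.4y + 0.375 and u₀(x,y) = 0 otherwise is a weak solution of ∇·(βu₀) = 0 on the open square (0,1)² with velocity β(x,y) = (0.8y − 0.4, −1): for every smooth function φ : ℝ² → ℝ with compact support contained in (0,1)², ∫_{(0,1)²} u₀(x,y)·((0.8y − 0.4)·∂φ/∂x(x,y) − ∂φ/∂y(x,y)) dx dy = 0. -/
/-!
The velocity `β` is tangent to the horizontal translates of the interface, so the shear that moves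
the interface to a straight line sends `u₀` to a function constant along `β`. The shear preserves
Lebesgue measure; integrating by parts along `β` in the sheared coordinates leaves only the
derivative of `u₀` along `β`, which is zero.
-/

open MeasureTheory

section Topology

variable {X Y : Type*} [TopologicalSpace X] [TopologicalSpace Y]

/-- The shear `(x, y) ↦ (x + g y, y)`. It is a homeomorphism, so that compact supports can be
pulled back along it. -/
@[simps]
def shearHomeomorph [AddGroup X] [IsTopologicalAddGroup X] (g : C(Y, X)) : X × Y ≃ₜ X × Y where
  toFun p := (p.1 + g p.2, p.2)
  invFun p := (p.1 - g p.2, p.2)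
  left_inv p := by simp
  right_inv p := by simp

theorem locallyIntegrable_comp_fst {E : Type*} [NormedAddCommGroup E]
    [MeasurableSpace X] [MeasurableSpace Y] {μ : Measure X} {ν : Measure Y} [SFinite μ] [SFinite ν]
    [IsLocallyFiniteMeasure ν] {f : X → E} (hf : LocallyIntegrable f μ) :
    LocallyIntegrable (fun p : X × Y => f p.1) (μ.prod ν) := by
  rintro ⟨x, y⟩
  obtain ⟨s, hs, hfs⟩ := hf x
  obtain ⟨t, ht, hνt⟩ := ν.finiteAt_nhds y
  have : IsFiniteMeasure (ν.restrict t) := ⟨by simpa using hνt⟩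
  refine ⟨s ×ˢ t, prod_mem_nhds hs ht, ?_⟩
  rw [IntegrableOn, ← Measure.prod_restrict]
  exact hfs.integrable.comp_fst _

end Topology

theorem measurePreserving_shear {X Y : Type*} [MeasurableSpace X] [MeasurableSpace Y] [AddGroup X]
    [MeasurableAdd₂ X] {μ : Measure X} [μ.IsAddRightInvariant] [SFinite μ] {ν : Measure Y}
    [SFinite ν] {g : Y → X} (hg : Measurable g) :
    MeasurePreserving (fun p : X × Y => (p.1 + g p.2, p.2)) (μ.prod ν) (μ.prod ν) :=
  have hskew : MeasurePreserving (fun q : Y × X => (q.1, q.2 + g q.1)) (ν.prod μ) (ν.prod μ) :=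
    (MeasurePreserving.id ν).skew_product (g := fun y x => x + g y) (by fun_prop)
      (.of_forall fun y => map_add_right_eq_self μ (g y))
  Measure.measurePreserving_swap.comp (hskew.comp Measure.measurePreserving_swap)

section Calculus

variable {X Y F : Type*} [NormedAddCommGroup X] [NormedSpace ℝ X] [NormedAddCommGroup Y]
  [NormedSpace ℝ Y] [NormedAddCommGroup F] [NormedSpace ℝ F]

theorem fderiv_comp_shear {φ : X × Y → F} {g : Y → X} {p : X × Y}
    (hφ : DifferentiableAt ℝ φ (p.1 + g p.2, p.2)) (hg : DifferentiableAt ℝ g p.2) (w : Y) :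
    fderiv ℝ (fun q : X × Y => φ (q.1 + g q.2, q.2)) p (0, w) =
      fderiv ℝ φ (p.1 + g p.2, p.2) (fderiv ℝ g p.2 w, w) := by
  have hshear := (hasFDerivAt_fst.add (hg.hasFDerivAt.comp p hasFDerivAt_snd)).prodMk
    (hasFDerivAt_snd (𝕜 := ℝ) (p := p))
  simpa [Function.comp_def] using
    DFunLike.congr_fun (hφ.hasFDerivAt.comp p hshear).fderiv (0, w)

theorem integral_smul_fderiv_eq_zero_of_hasLineDerivAt_zero {E : Type*} [NormedAddCommGroup E]
    [NormedSpace ℝ E] [FiniteDimensional ℝ E] [MeasurableSpace E] [BorelSpace E] {μ : Measure E}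
    [μ.IsAddHaarMeasure] {u : E → ℝ} {ψ : E → F} {v : E} (hu : LocallyIntegrable u μ)
    (hu' : ∀ x, HasLineDerivAt ℝ u 0 x v) (hψ : ContDiff ℝ 1 ψ) (hψc : HasCompactSupport ψ) :
    ∫ x, u x • fderiv ℝ ψ x v ∂μ = 0 := by
  have hψ' : Continuous fun x => fderiv ℝ ψ x v :=
    (hψ.continuous_fderiv one_ne_zero).clm_apply continuous_const
  simpa using integral_bilinear_hasLineDerivAt_right_eq_neg_left_of_integrable (μ := μ)
    (B := ContinuousLinearMap.lsmul ℝ ℝ) (f := u) (f' := 0) (g := ψ) (v := v)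
    (by simp)
    (hu.integrable_smul_right_of_hasCompactSupport hψ' (hψc.fderiv_apply (𝕜 := ℝ) v))
    (hu.integrable_smul_right_of_hasCompactSupport hψ.continuous hψc)
    (fun x _ => hu' x)
    (fun x _ => (hψ.differentiable one_ne_zero x).hasFDerivAt.hasLineDerivAt v)

theorem integral_sheared_profile_smul_fderiv_eq_zero [FiniteDimensional ℝ X]
    [FiniteDimensional ℝ Y] [MeasurableSpace X] [BorelSpace X] [MeasurableSpace Y] [BorelSpace Y]
    {μ : Measure X} [μ.IsAddHaarMeasure] {ν : Measure Y} [ν.IsAddHaarMeasure]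
    {h : X → ℝ} {g : Y → X} {φ : X × Y → F} (hh : LocallyIntegrable h μ) (hg : ContDiff ℝ 1 g)
    (hφ : ContDiff ℝ 1 φ) (hφc : HasCompactSupport φ) (w : Y) :
    ∫ p, h (p.1 - g p.2) • fderiv ℝ φ p (fderiv ℝ g p.2 w, w) ∂(μ.prod ν) = 0 := by
  let T : X × Y ≃ₜ X × Y := shearHomeomorph ⟨g, hg.continuous⟩
  have hT : MeasurePreserving T (μ.prod ν) (μ.prod ν) :=
    measurePreserving_shear hg.continuous.measurable
  have hφT : ContDiff ℝ 1 (φ ∘ T) :=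
    hφ.comp ((contDiff_fst.add (hg.comp contDiff_snd)).prodMk contDiff_snd)
  have h_const (p : X × Y) : HasLineDerivAt ℝ (fun q : X × Y => h q.1) 0 p (0, w) := by
    simpa [HasLineDerivAt] using hasDerivAt_const (0 : ℝ) (h p.1)
  calc ∫ p, h (p.1 - g p.2) • fderiv ℝ φ p (fderiv ℝ g p.2 w, w) ∂(μ.prod ν)
      = ∫ p, h p.1 • fderiv ℝ φ (T p) (fderiv ℝ g p.2 w, w) ∂(μ.prod ν) := by
        rw [← hT.integral_comp T.measurableEmbedding]
        simp [T]
    _ = ∫ p, h p.1 • fderiv ℝ (φ ∘ T) p (0, w) ∂(μ.prod ν) := by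
        congr! 3 with p
        exact (fderiv_comp_shear (hφ.differentiable one_ne_zero _)
          (hg.differentiable one_ne_zero _) w).symm
    _ = 0 := integral_smul_fderiv_eq_zero_of_hasLineDerivAt_zero
        (locallyIntegrable_comp_fst hh) h_const hφT (hφc.comp_homeomorph T)

end Calculus

theorem indicator_weak_solution_vector_advection_general {b g : ℝ → ℝ} {φ : ℝ × ℝ → ℝ}
    {U : Set (ℝ × ℝ)} (hb : Continuous b) (hg : ∀ y, HasDerivAt g (-b y) y)
    (hφ : ContDiff ℝ 1 φ) (hcpt : HasCompactSupport φ) (hsupp : tsupport φ ⊆ U) :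
    ∫ p in U, (if p.1 ≤ g p.2 then (1:ℝ) else 0) *
      (b p.2 * fderiv ℝ φ p (1, 0) - fderiv ℝ φ p (0, 1)) = 0 := by
  have hderiv : deriv g = -b := funext fun y => (hg y).deriv
  have hg₁ : ContDiff ℝ 1 g :=
    contDiff_one_iff_deriv.2 ⟨fun y => (hg y).differentiableAt, hderiv ▸ hb.neg⟩
  have hprofile : LocallyIntegrable ((Set.Iic (0:ℝ)).indicator fun _ => (1:ℝ)) :=
    (locallyIntegrable_const 1).indicator measurableSet_Iic
  have h_tangent (p : ℝ × ℝ) : fderiv ℝ φ p (fderiv ℝ g p.2 (-1), -1) =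
      b p.2 * fderiv ℝ φ p (1, 0) - fderiv ℝ φ p (0, 1) := by
    have hvelocity : ((fderiv ℝ g p.2 (-1), -1) : ℝ × ℝ) = b p.2 • (1, 0) - (0, 1) := by
      simp [hderiv]
    rw [hvelocity, map_sub, map_smul, smul_eq_mul]
  rw [setIntegral_eq_integral_of_forall_compl_eq_zero fun p hp => by
    simp [image_eq_zero_of_notMem_tsupport fun h => hp (hsupp (tsupport_fderiv_subset ℝ h))]]
  have hzero := integral_sheared_profile_smul_fderiv_eq_zero (ν := volume) hprofile hg₁ hφ hcpt (-1)
  simpa only [h_tangent, Set.indicator_apply, Set.mem_Iic, sub_nonpos, smul_eq_mul,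
    ← Measure.volume_eq_prod] using hzero

theorem hasDerivAt_interface (y : ℝ) :
    HasDerivAt (fun y : ℝ => -0.4 * y ^ 2 + 0.4 * y + 0.375) (-(0.8 * y - 0.4)) y := by
  have hpoly := ((((hasDerivAt_id y).pow 2).const_mul (-0.4)).add
    ((hasDerivAt_id y).const_mul 0.4)).add_const 0.375
  exact hpoly.congr_deriv (by norm_num; ring)

/-- The indicator function `u₀(x,y) = 1` if `x ≤ -0.4 y² + 0.4 y + 0.375`, `0` otherwise,
is a weak solution of `∇·(β u₀) = 0` on the open square `(0,1)²` with the divergence-free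
velocity `β(x,y) = (0.8 y - 0.4, -1)`: for every smooth `φ : ℝ² → ℝ` with compact support
contained in `(0,1)²`,
`∫_{(0,1)²} u₀ · ((0.8 y - 0.4) ∂φ/∂x - ∂φ/∂y) dx dy = 0`. -/
theorem indicator_weak_solution_vector_advection
    (φ : ℝ × ℝ → ℝ) (hφ : ContDiff ℝ (⊤ : ℕ∞) φ) (hcpt : HasCompactSupport φ)
    (hsupp : tsupport φ ⊆ Set.Ioo (0:ℝ) 1 ×ˢ Set.Ioo (0:ℝ) 1) :
    ∫ p in Set.Ioo (0:ℝ) 1 ×ˢ Set.Ioo (0:ℝ) 1,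
      (if p.1 ≤ -0.4 * p.2 ^ 2 + 0.4 * p.2 + 0.375 then (1:ℝ) else 0) *
        ((0.8 * p.2 - 0.4) * fderiv ℝ φ p (1, 0) - fderiv ℝ φ p (0, 1)) = 0 := by
  exact indicator_weak_solution_vector_advection_general (b := fun y => 0.8 * y - 0.4)
    (by fun_prop) hasDerivAt_interface (hφ.of_le (by norm_cast)) hcpt hsupp
end

section
/- The piecewise-defined function u₁ of the vector advection test case is continuous on the closed square [0,1]². -/
/-- `ỹ(x,y) = (1.4 - √(1.96 + 1.6(0.375 - x - y)))/0.8`. -/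
noncomputable def ytil (x y : ℝ) : ℝ :=
  (1.4 - Real.sqrt (1.96 + 1.6 * (0.375 - x - y))) / 0.8

/-- `x̃(x,y) = -0.4 ỹ² + 0.4 ỹ + 0.375`. -/
noncomputable def xtil (x y : ℝ) : ℝ :=
  -0.4 * (ytil x y) ^ 2 + 0.4 * ytil x y + 0.375

/-- The shock curve `c(y) = -0.4 y² + 0.4 y + 0.375`. -/
def shockCurve (y : ℝ) : ℝ := -0.4 * y ^ 2 + 0.4 * y + 0.375

/-- The exact solution `u₁` of the vector advection test case, defined piecewise:
`u₁ = 1.3 - y` if `y > 1 - x` and `x ≤ c(y)`; `u₁ = 0.3 + x` if `y ≤ 1 - x` and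
`x ≤ c(y)`; `u₁ = 0.3 + x̃` if `y ≤ 1 - x` and `x > c(y)`; `u₁ = 1.3 - ỹ` if `x > c(y)`
and `1 - x < y < 1.375 - x`; `u₁ = 0.3` if `y ≥ 1.375 - x`. -/
noncomputable def uOne (x y : ℝ) : ℝ :=
  if 1.375 - x ≤ y then 0.3
  else if x ≤ shockCurve y then (if 1 - x < y then 1.3 - y else 0.3 + x)
  else (if y ≤ 1 - x then 0.3 + xtil x y else 1.3 - ytil x y)

/-!
Left of the shock curve `u₁ = g`, where `g(x, y) = 0.3 + min (x + y) 1 - y`. To the right of it,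
`(x̃, ỹ)` is the point where the antidiagonal through `(x, y)` meets the curve, and `u₁(x, y)` is
`g(x̃, ỹ)` as long as `x + y < 1.375`. At `x + y = 1.375` the height `ỹ` reaches `1` and `g(x̃, ỹ)`
reaches `0.3`, the value of `u₁` from there on. Since `x̃ + ỹ = x + y`, all five branches are
`0.3 + min (x + y) 1 - η` with the single height `η = max y (min ỹ 1)`, which is continuous.
-/

/-- The height `η` at which `u₁(x, y)` is read off: on the antidiagonal through `(x, y)`, it is the
height of the point itself to the left of the shock curve and of the crossing with the curve to its
right, the latter capped at the top `1` of the square. -/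
noncomputable def footHeight (x y : ℝ) : ℝ := max y (min (ytil x y) 1)

lemma sq_eq_shockCurve_add_self (t : ℝ) :
    (1.4 - 0.8 * t) ^ 2 = 1.96 + 1.6 * (0.375 - (shockCurve t + t)) := by
  unfold shockCurve
  ring

section ShockCurve

variable {x y t : ℝ}

-- The bound `1.75` is the maximiser of `t ↦ shockCurve t + t`, of which `ytil` inverts the
-- increasing branch.
lemma le_ytil_iff (ht : t ≤ 1.75) : t ≤ ytil x y ↔ shockCurve t + t ≤ x + y := by
  calc t ≤ ytil x y
      ↔ √(1.96 + 1.6 * (0.375 - x - y)) ≤ 1.4 - 0.8 * t := by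
        rw [ytil, le_div_iff₀ (by norm_num), le_sub_comm, mul_comm t]
    _ ↔ 1.96 + 1.6 * (0.375 - x - y) ≤ (1.4 - 0.8 * t) ^ 2 :=
        Real.sqrt_le_left (by linarith)
    _ ↔ shockCurve t + t ≤ x + y := by
        rw [sq_eq_shockCurve_add_self]
        constructor <;> intro h <;> linarith

lemma ytil_le_iff (ht : t < 1.75) : ytil x y ≤ t ↔ x + y ≤ shockCurve t + t := by
  calc ytil x y ≤ t
      ↔ 1.4 - 0.8 * t ≤ √(1.96 + 1.6 * (0.375 - x - y)) := by
        rw [ytil, div_le_iff₀ (by norm_num), sub_le_comm, mul_comm t]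
    _ ↔ (1.4 - 0.8 * t) ^ 2 ≤ 1.96 + 1.6 * (0.375 - x - y) :=
        Real.le_sqrt' (by linarith)
    _ ↔ x + y ≤ shockCurve t + t := by
        rw [sq_eq_shockCurve_add_self]
        constructor <;> intro h <;> linarith

lemma one_le_ytil_iff : 1 ≤ ytil x y ↔ 1.375 ≤ x + y := by
  rw [le_ytil_iff (by norm_num)]
  norm_num [shockCurve]

-- For `x + y > 1.6` the antidiagonal misses the curve and the square root is the junk value `0`.
lemma xtil_add_ytil (h : x + y ≤ 1.6) : xtil x y + ytil x y = x + y := by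
  have hsq : √(1.96 + 1.6 * (0.375 - x - y)) ^ 2 = 1.96 + 1.6 * (0.375 - x - y) :=
    Real.sq_sqrt (by linarith)
  unfold xtil ytil
  linear_combination (-0.625) * hsq

lemma continuous_ytil : Continuous fun p : ℝ × ℝ => ytil p.1 p.2 := by
  unfold ytil
  fun_prop

lemma footHeight_eq_self (hy : y < 1.75) (h : x ≤ shockCurve y) : footHeight x y = y :=
  max_eq_left <| min_le_of_left_le <| (ytil_le_iff hy).2 <| by gcongr

lemma footHeight_eq_ytil (hy : y ≤ 1.75) (hc : shockCurve y ≤ x) (h : x + y < 1.375) :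
    footHeight x y = ytil x y := by
  have h_ytil_le : ytil x y ≤ 1 := (lt_of_not_ge (mt one_le_ytil_iff.1 h.not_ge)).le
  have h_le_ytil : y ≤ ytil x y := (le_ytil_iff hy).2 (by gcongr)
  rw [footHeight, min_eq_left h_ytil_le, max_eq_right h_le_ytil]

lemma footHeight_eq_one (hy : y ≤ 1) (h : 1.375 ≤ x + y) : footHeight x y = 1 := by
  rw [footHeight, min_eq_right (one_le_ytil_iff.2 h), max_eq_right hy]

lemma continuous_footHeight : Continuous fun p : ℝ × ℝ => footHeight p.1 p.2 :=
  continuous_snd.max (continuous_ytil.min continuous_const)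

lemma uOne_eq_min_sub_footHeight (hy : y ≤ 1) :
    uOne x y = 0.3 + min (x + y) 1 - footHeight x y := by
  unfold uOne
  split_ifs with h_far h_left h_above h_below
  · rw [footHeight_eq_one hy (by linarith), min_eq_right (by linarith)]
    ring
  · rw [footHeight_eq_self (by linarith) h_left, min_eq_right (by linarith)]
    ring
  · rw [footHeight_eq_self (by linarith) h_left, min_eq_left (by linarith)]
    ring
  · rw [footHeight_eq_ytil (by linarith) (by linarith) (by linarith), min_eq_left (by linarith)]
    linear_combination xtil_add_ytil (x := x) (y := y) (by linarith)
  · rw [footHeight_eq_ytil (by linarith) (by linarith) (by linarith), min_eq_right (by linarith)]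
    ring

end ShockCurve

theorem uOne_continuousOn_general :
    ContinuousOn (fun p : ℝ × ℝ => uOne p.1 p.2) {p | p.2 ≤ 1} := by
  have h_closed_form : Continuous fun p : ℝ × ℝ =>
      0.3 + min (p.1 + p.2) 1 - footHeight p.1 p.2 :=
    (continuous_const.add ((continuous_fst.add continuous_snd).min continuous_const)).sub
      continuous_footHeight
  exact h_closed_form.continuousOn.congr fun _ hp => uOne_eq_min_sub_footHeight hp

/-- The piecewise-defined exact solution `u₁` of the vector advection test case is
continuous on the closed square `[0,1]²`. -/
theorem uOne_continuousOn :
    ContinuousOn (fun p : ℝ × ℝ => uOne p.1 p.2)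
      (Set.Icc (0:ℝ) 1 ×ˢ Set.Icc (0:ℝ) 1) :=
  uOne_continuousOn_general.mono fun _ hp => hp.2.2
end

section
/- Let ψ : ℝ² → ℝ be continuously differentiable on an open set containing K = {(x,y) ∈ [0,1]² : x + y ≤ 1}, and suppose (0.8y − 0.4)·∂ψ/∂x(x,y) − ∂ψ/∂y(x,y) = 0 for all (x,y) ∈ K (i.e., ψ solves the adjoint transport equation ∇ψ·β = 0 with β(x,y) = (0.8y − 0.4, −1)), ψ(x,0) = 0 for all x ∈ [0,1], and ψ(0,y) = 0 for all y ∈ [0, 1/2]. Then ψ(x,y) = 0 for every (x,y) ∈ K. -/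
/-! Along a curve tangent to `β` the derivative of `ψ` is `∇ψ·β = 0`, so `ψ` is constant on the
characteristics. For `β = (κ (2 y - 1), -1)` these are the parabolas `x = c + κ (y - y ^ 2)`, whose
abscissa is strictly concave in `y`, while `x + y` strictly increases with `y ≤ 1`. Hence a
characteristic followed downwards from a point of the triangle stays inside it until it reaches
either the bottom edge or, on the increasing branch `y ≤ 1 / 2` of the parabola, the left edge;
there `ψ = 0`. -/

open Set

section Constancy

variable {E F : Type*} [NormedAddCommGroup E] [NormedSpace ℝ E]
  [NormedAddCommGroup F] [NormedSpace ℝ F] {a b : ℝ}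

theorem eq_endpoints_of_hasDerivAt_zero {f : ℝ → E} (hab : a ≤ b) (hf : ContinuousOn f (Icc a b))
    (hf' : ∀ t ∈ Ioo a b, HasDerivAt f 0 t) : f a = f b := by
  rcases hab.eq_or_lt with rfl | hlt
  · rfl
  obtain ⟨v, hv⟩ := isOpen_Ioo.exists_is_const_of_deriv_eq_zero isPreconnected_Ioo
    (fun t ht => (hf' t ht).differentiableAt.differentiableWithinAt)
    (fun t ht => (hf' t ht).deriv)
  have hconst : EqOn f (fun _ => v) (Icc a b) :=
    EqOn.of_subset_closure hv hf continuousOn_const Ioo_subset_Icc_self (closure_Ioo hlt.ne).ge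
  exact (hconst (left_mem_Icc.2 hab)).trans (hconst (right_mem_Icc.2 hab)).symm

theorem eq_endpoints_of_fderiv_tangent_eq_zero {ψ : F → E} {K : Set F} {γ γ' : ℝ → F}
    (hab : a ≤ b) (hψ : ContinuousOn ψ K) (hγ : ContinuousOn γ (Icc a b))
    (hmaps : MapsTo γ (Icc a b) K) (hγ' : ∀ t ∈ Ioo a b, HasDerivAt γ (γ' t) t)
    (hdiff : ∀ t ∈ Ioo a b, DifferentiableAt ℝ ψ (γ t))
    (htangent : ∀ t ∈ Ioo a b, fderiv ℝ ψ (γ t) (γ' t) = 0) : ψ (γ a) = ψ (γ b) :=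
  eq_endpoints_of_hasDerivAt_zero hab (hψ.comp hγ hmaps) fun t ht =>
    htangent t ht ▸ (hdiff t ht).hasFDerivAt.comp_hasDerivAt t (hγ' t ht)

end Constancy

/-- The part of the unit square on or below the line `x + y = 1`: the region where the adjoint
equation is homogeneous. -/
def lowerTriangle : Set (ℝ × ℝ) :=
  {p | p ∈ Icc (0 : ℝ) 1 ×ˢ Icc (0 : ℝ) 1 ∧ p.1 + p.2 ≤ 1}

theorem mem_lowerTriangle {p : ℝ × ℝ} :
    p ∈ lowerTriangle ↔ 0 ≤ p.1 ∧ 0 ≤ p.2 ∧ p.1 + p.2 ≤ 1 := by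
  simp only [lowerTriangle, mem_ofPred_eq, mem_prod, mem_Icc]
  grind

theorem mem_interior_lowerTriangle {p : ℝ × ℝ} (hx : 0 < p.1) (hy : 0 < p.2)
    (hxy : p.1 + p.2 < 1) : p ∈ interior lowerTriangle := by
  have hopen : IsOpen {q : ℝ × ℝ | 0 < q.1 ∧ 0 < q.2 ∧ q.1 + q.2 < 1} :=
    (isOpen_lt continuous_const continuous_fst).inter
      ((isOpen_lt continuous_const continuous_snd).inter
        (isOpen_lt (continuous_fst.add continuous_snd) continuous_const))
  exact interior_maximal
    (fun q hq => mem_lowerTriangle.2 ⟨hq.1.le, hq.2.1.le, hq.2.2.le⟩) hopen ⟨hx, hy, hxy⟩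

/-- The characteristic of the transport field `β(x, y) = (κ (2 y - 1), -1)` that meets the axis
`y = 0` at abscissa `c`. It is parametrized by the ordinate, hence traversed with velocity `-β`. -/
def characteristic (κ c s : ℝ) : ℝ × ℝ := (c + κ * (s - s ^ 2), s)

section Characteristic

variable {κ c a s y : ℝ}

theorem hasDerivAt_characteristic (κ c s : ℝ) :
    HasDerivAt (characteristic κ c) (-(κ * (2 * s - 1), -1)) s := by
  have habscissa : HasDerivAt (fun t => c + κ * (t - t ^ 2)) (κ * (1 - 2 * s)) s := by
    simpa using (((hasDerivAt_id s).sub ((hasDerivAt_id s).pow 2)).const_mul κ).const_add c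
  have hvelocity : (-(κ * (2 * s - 1), -1) : ℝ × ℝ) = (κ * (1 - 2 * s), 1) := by
    ext <;> simp
    ring
  rw [hvelocity]
  exact habscissa.prodMk (hasDerivAt_id s)

theorem exists_eq_characteristic (κ : ℝ) (p : ℝ × ℝ) : ∃ c, p = characteristic κ c p.2 :=
  ⟨p.1 - κ * (p.2 - p.2 ^ 2), by ext <;> simp [characteristic]⟩

theorem strictMonoOn_characteristic_fst_add_snd (hκ0 : 0 < κ) (hκ1 : κ ≤ 1) :
    StrictMonoOn (fun s => (characteristic κ c s).1 + (characteristic κ c s).2) (Iic 1) := by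
  intro s _ t (ht : t ≤ 1) hst
  have hslope : 0 < 1 + κ * (1 - s - t) := by
    linear_combination mul_pos hκ0 (show 0 < 2 - s - t by linarith) + hκ1
  simp only [characteristic]
  linear_combination mul_pos (sub_pos.2 hst) hslope

theorem characteristic_fst_pos (hκ : 0 < κ) (ha : 0 ≤ (characteristic κ c a).1)
    (hy : 0 ≤ (characteristic κ c y).1) (hs : s ∈ Ioo a y) :
    0 < (characteristic κ c s).1 := by
  obtain ⟨has, hsy⟩ : 0 < s - a ∧ 0 < y - s := ⟨sub_pos.2 hs.1, sub_pos.2 hs.2⟩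
  have hconcave : (y - a) * (characteristic κ c s).1 =
      (y - s) * (characteristic κ c a).1 + (s - a) * (characteristic κ c y).1
        + κ * (s - a) * (y - s) * (y - a) := by
    simp only [characteristic]
    ring
  have hya : 0 < y - a := by linarith
  refine pos_of_mul_pos_right (b := (characteristic κ c s).1) ?_ hya.le
  rw [hconcave]
  positivity

theorem characteristic_mem_interior (hκ0 : 0 < κ) (hκ1 : κ ≤ 1)
    (ha : characteristic κ c a ∈ lowerTriangle) (hy : characteristic κ c y ∈ lowerTriangle)
    (hs : s ∈ Ioo a y) : characteristic κ c s ∈ interior lowerTriangle := by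
  obtain ⟨hxa, ha0, -⟩ := mem_lowerTriangle.1 ha
  obtain ⟨hxy, -, hsum⟩ := mem_lowerTriangle.1 hy
  have hy1 : y ≤ 1 := hy.1.2.2
  exact mem_interior_lowerTriangle (characteristic_fst_pos hκ0 hxa hxy hs) (ha0.trans_lt hs.1)
    ((strictMonoOn_characteristic_fst_add_snd hκ0 hκ1 (hs.2.le.trans hy1) hy1 hs.2).trans_le
      hsum)

theorem mapsTo_characteristic_Icc (hκ0 : 0 < κ) (hκ1 : κ ≤ 1)
    (ha : characteristic κ c a ∈ lowerTriangle) (hy : characteristic κ c y ∈ lowerTriangle) :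
    MapsTo (characteristic κ c) (Icc a y) lowerTriangle := by
  intro s hs
  rcases eq_endpoints_or_mem_Ioo_of_mem_Icc hs with rfl | rfl | hs
  · exact ha
  · exact hy
  · exact interior_subset (characteristic_mem_interior hκ0 hκ1 ha hy hs)

theorem exists_characteristic_fst_eq_zero (hκ : 0 ≤ κ) (hc : c ≤ 0) (hy : 0 ≤ y)
    (hx : 0 ≤ (characteristic κ c y).1) :
    ∃ a ∈ Icc 0 (min y (1 / 2)), (characteristic κ c a).1 = 0 := by
  have hmin : 0 ≤ (characteristic κ c (min y (1 / 2))).1 := by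
    rcases min_choice y (1 / 2) with h | h <;> rw [h]
    · exact hx
    -- The abscissa is maximal at `1 / 2`.
    · refine hx.trans ?_
      simp only [characteristic]
      nlinarith [mul_nonneg hκ (sq_nonneg (y - 1 / 2))]
  exact intermediate_value_Icc (le_min hy (by norm_num))
    (f := fun s => (characteristic κ c s).1) (by unfold characteristic; fun_prop)
    ⟨by simpa [characteristic] using hc, hmin⟩

theorem exists_characteristic_exit (hκ0 : 0 < κ) (hκ1 : κ ≤ 1)
    (hy : characteristic κ c y ∈ lowerTriangle) :
    ∃ a ≤ y, characteristic κ c a ∈ lowerTriangle ∧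
      (a = 0 ∨ a ≤ 1 / 2 ∧ (characteristic κ c a).1 = 0) := by
  obtain ⟨hx, hy0 : 0 ≤ y, hsum⟩ := mem_lowerTriangle.1 hy
  have hy1 : y ≤ 1 := hy.1.2.2
  have hmem : ∀ a ∈ Icc 0 y, 0 ≤ (characteristic κ c a).1 →
      characteristic κ c a ∈ lowerTriangle := fun a ha hxa =>
    mem_lowerTriangle.2 ⟨hxa, ha.1, ((strictMonoOn_characteristic_fst_add_snd hκ0 hκ1).monotoneOn
      (ha.2.trans hy1) hy1 ha.2).trans hsum⟩
  rcases le_total 0 c with hc | hc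
  · exact ⟨0, hy0, hmem 0 ⟨le_rfl, hy0⟩ (by simpa [characteristic] using hc), .inl rfl⟩
  · obtain ⟨a, ⟨ha0, ha⟩, hxa⟩ := exists_characteristic_fst_eq_zero hκ0.le hc hy0 hx
    obtain ⟨hay, hahalf⟩ := le_min_iff.1 ha
    exact ⟨a, hay, hmem a ⟨ha0, hay⟩ hxa.ge, .inr ⟨hahalf, hxa⟩⟩

end Characteristic

theorem adjoint_psi0_vanishes_below_line_general
    {E : Type*} [NormedAddCommGroup E] [NormedSpace ℝ E] {κ : ℝ} (hκ0 : 0 < κ) (hκ1 : κ ≤ 1)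
    {ψ : ℝ × ℝ → E} (hcont : ContinuousOn ψ lowerTriangle)
    (hdiff : ∀ p ∈ interior lowerTriangle, DifferentiableAt ℝ ψ p)
    (hpde : ∀ p ∈ interior lowerTriangle, fderiv ℝ ψ p (κ * (2 * p.2 - 1), -1) = 0)
    (hbottom : ∀ x ∈ Icc (0 : ℝ) 1, ψ (x, 0) = 0)
    (hleft : ∀ y ∈ Icc (0 : ℝ) (1 / 2), ψ (0, y) = 0) :
    ∀ p ∈ lowerTriangle, ψ p = 0 := by
  intro p hp
  obtain ⟨c, hpc⟩ := exists_eq_characteristic κ p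
  rw [hpc] at hp ⊢
  obtain ⟨a, hay, ha, hexit⟩ := exists_characteristic_exit hκ0 hκ1 hp
  have hinterior := fun s (hs : s ∈ Ioo a p.2) => characteristic_mem_interior hκ0 hκ1 ha hp hs
  rw [← eq_endpoints_of_fderiv_tangent_eq_zero hay hcont
    (fun s _ => (hasDerivAt_characteristic κ c s).continuousAt.continuousWithinAt)
    (mapsTo_characteristic_Icc hκ0 hκ1 ha hp) (fun s _ => hasDerivAt_characteristic κ c s)
    (fun s hs => hdiff _ (hinterior s hs))
    (fun s hs => by rw [map_neg, neg_eq_zero]; exact hpde _ (hinterior s hs))]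
  rcases hexit with rfl | ⟨hahalf, hxa⟩
  · exact hbottom _ ha.1.1
  · rw [show characteristic κ c a = (0, a) from Prod.ext hxa rfl]
    exact hleft a ⟨ha.1.2.1, hahalf⟩

/-- If `ψ` is continuously differentiable on an open set containing
`K = {(x,y) ∈ [0,1]² : x + y ≤ 1}`, solves the adjoint transport equation `∇ψ·β = 0`
with `β(x,y) = (0.8 y - 0.4, -1)` on `K`, vanishes on the bottom edge `y = 0` for
`x ∈ [0,1]`, and vanishes on the left edge `x = 0` for `y ∈ [0, 1/2]`, then `ψ`
vanishes on all of `K`. -/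
theorem adjoint_psi0_vanishes_below_line
    (ψ : ℝ × ℝ → ℝ) (U : Set (ℝ × ℝ)) (hU : IsOpen U)
    (hsub : {p : ℝ × ℝ | p ∈ Set.Icc (0:ℝ) 1 ×ˢ Set.Icc (0:ℝ) 1 ∧ p.1 + p.2 ≤ 1} ⊆ U)
    (hdiff : ContDiffOn ℝ 1 ψ U)
    (hpde : ∀ p ∈ {p : ℝ × ℝ | p ∈ Set.Icc (0:ℝ) 1 ×ˢ Set.Icc (0:ℝ) 1 ∧ p.1 + p.2 ≤ 1},
      (0.8 * p.2 - 0.4) * fderiv ℝ ψ p (1, 0) - fderiv ℝ ψ p (0, 1) = 0)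
    (hbottom : ∀ x ∈ Set.Icc (0:ℝ) 1, ψ (x, 0) = 0)
    (hleft : ∀ y ∈ Set.Icc (0:ℝ) (1/2), ψ (0, y) = 0) :
    ∀ p ∈ {p : ℝ × ℝ | p ∈ Set.Icc (0:ℝ) 1 ×ˢ Set.Icc (0:ℝ) 1 ∧ p.1 + p.2 ≤ 1},
      ψ p = 0 := by
  have hψ : ∀ p ∈ lowerTriangle, DifferentiableAt ℝ ψ p := fun p hp =>
    (hdiff.contDiffAt (hU.mem_nhds (hsub hp))).differentiableAt one_ne_zero
  refine adjoint_psi0_vanishes_below_line_general (κ := 0.4) (by norm_num) (by norm_num)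
    (fun p hp => (hψ p hp).continuousAt.continuousWithinAt)
    (fun p hp => hψ p (interior_subset hp)) (fun p hp => ?_) hbottom hleft
  have hfield : ((0.4 * (2 * p.2 - 1), -1) : ℝ × ℝ) = (0.8 * p.2 - 0.4) • (1, 0) - (0, 1) := by
    ext <;> simp
    ring
  rw [hfield, map_sub, map_smul, smul_eq_mul, hpde p (interior_subset hp)]
end
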